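/- Let k ≥ 2 and let D ⊆ R^k be a β-column set. For each j ∈ {0,…,s−1}, the number of x ∈ R^k whose codeword (x·g)_{g∈D} in S_k^β has Hamming weight exactly L_β(k) − q^j·L_β(k−1) equals q^(k(s−j)) − q^(k(s−j−1)), and the only x giving Hamming weight 0 is x = 0. -/

import Mathlib

/-- A β-column set: a finite set `D ⊆ R^k` such that every `g ∈ D` has a unit coordinate,
and every vector of `R^k` with a unit coordinate is `u • g` for a unique unit `u` and a
unique `g ∈ D`. -/
def IsBetaColumnSet {R : Type} [CommRing R] {k : ℕ} (D : Finset (Fin k → R)) : Prop :=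
  (∀ g ∈ D, ∃ i, IsUnit (g i)) ∧
  (∀ w : Fin k → R, (∃ i, IsUnit (w i)) →
    ∃! ug : Rˣ × (Fin k → R), ug.2 ∈ D ∧ w = (ug.1 : R) • ug.2)

/-- `L_β(j) = q^((s−1)(j−1))·(q^j − 1)/(q − 1)`, written via the geometric sum. -/
def Lbeta (q s j : ℕ) : ℕ := q ^ ((s - 1) * (j - 1)) * ∑ i ∈ Finset.range j, q ^ i

/-! The functional `x ⬝ᵥ ·` maps the vectors with entries in an ideal `I` onto
`I * contentIdeal x`, so the number of such vectors orthogonal to `x` depends only on the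
cardinalities of `I` and `I * contentIdeal x`. The cases of the unit ideal and the maximal ideal `𝔪`
together count the unimodular vectors orthogonal to `x`, and each column of `D` accounts for `|Rˣ|`
unimodular vectors; this gives the number of zero coordinates of the codeword of `x`. In a chain
ring the content of `x ≠ 0` is `𝔪 ^ j` for some `j < s`, the corresponding weights are distinct for
distinct `j`, and the vectors of content `𝔪 ^ j` are those with all coordinates in `𝔪 ^ j` but not
all in `𝔪 ^ (j + 1)`. -/

section Counting

theorem card_and_add_card_and_not {α : Type*} {p : α → Prop} (hp : {a | p a}.Finite)
    (r : α → Prop) :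
    Nat.card {a // p a ∧ r a} + Nat.card {a // p a ∧ ¬ r a} = Nat.card {a // p a} :=
  Set.ncard_inter_add_ncard_sdiff_eq_ncard {a | p a} {a | r a} hp

theorem card_forall_mem {ι α : Type*} [Fintype ι] (S : Set α) :
    Nat.card {x : ι → α // ∀ i, x i ∈ S} = Nat.card S ^ Fintype.card ι := by
  rw [Nat.card_congr (Equiv.subtypePiEquivPi (p := fun _ a => a ∈ S)), Nat.card_fun,
    Nat.card_eq_fintype_card (α := ι)]

theorem card_ker_mul_card_range {R M N : Type*} [Ring R] [AddCommGroup M] [AddCommGroup N]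
    [Module R M] [Module R N] (f : M →ₗ[R] N) :
    Nat.card (LinearMap.ker f) * Nat.card (LinearMap.range f) = Nat.card M := by
  rw [← f.toAddMonoidHom.ker.card_mul_index, AddSubgroup.index_ker]
  rfl

end Counting

section ContentIdeal

open scoped Matrix

variable {R ι : Type*} [CommRing R]

/-- The content ideal of a vector: the ideal generated by its coordinates. It measures how far
the vector is from being unimodular, and it is the set of values of the functional `x ⬝ᵥ ·`. -/
def contentIdeal (x : ι → R) : Ideal R := Ideal.span (Set.range x)

theorem contentIdeal_le_iff {x : ι → R} {I : Ideal R} : contentIdeal x ≤ I ↔ ∀ i, x i ∈ I := by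
  rw [contentIdeal, Ideal.span_le, Set.range_subset_iff]
  rfl

theorem contentIdeal_eq_bot_iff {x : ι → R} : contentIdeal x = ⊥ ↔ x = 0 := by
  rw [← le_bot_iff, contentIdeal_le_iff, funext_iff]
  rfl

theorem card_contentIdeal_le [Fintype ι] (I : Ideal R) :
    Nat.card {x : ι → R // contentIdeal x ≤ I} = Nat.card I ^ Fintype.card ι := by
  simp only [contentIdeal_le_iff]
  exact card_forall_mem (I : Set R)

theorem range_linearCombination_comp_subtype [Fintype ι] (x : ι → R) (I : Ideal R) :
    LinearMap.range (Fintype.linearCombination R x ∘ₗ I.subtype.compLeft ι) =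
      I * contentIdeal x := by
  ext r
  rw [contentIdeal, ← smul_eq_mul, Ideal.span, Submodule.mem_ideal_smul_span_iff_exists_sum]
  constructor
  · rintro ⟨w, rfl⟩
    exact ⟨Finsupp.equivFunOnFinite.symm fun i => w i, fun i => (w i).2,
      Finsupp.sum_fintype _ _ fun i => zero_smul R (x i)⟩
  · rintro ⟨a, ha, rfl⟩
    exact ⟨fun i => ⟨a i, ha i⟩, (Finsupp.sum_fintype a (fun i c => c • x i)
      fun i => zero_smul R (x i)).symm⟩

theorem card_orthogonal_mul_card_mul_contentIdeal [Fintype ι] (x : ι → R) (I : Ideal R) :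
    Nat.card {w : ι → R // contentIdeal w ≤ I ∧ x ⬝ᵥ w = 0} * Nat.card ↥(I * contentIdeal x) =
      Nat.card I ^ Fintype.card ι := by
  let f := Fintype.linearCombination R x ∘ₗ I.subtype.compLeft ι
  have hf (w : ι → I) : f w = x ⬝ᵥ fun i => (w i : R) :=
    Finset.sum_congr rfl fun i _ => mul_comm _ _
  let e : LinearMap.ker f ≃ {w : ι → R // contentIdeal w ≤ I ∧ x ⬝ᵥ w = 0} :=
    { toFun w := ⟨fun i => w.1 i, contentIdeal_le_iff.2 fun i => (w.1 i).2, hf w.1 ▸ w.2⟩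
      invFun w := ⟨fun i => ⟨w.1 i, contentIdeal_le_iff.1 w.2.1 i⟩, (hf _).trans w.2.2⟩ }
  rw [← Nat.card_congr e, ← range_linearCombination_comp_subtype, card_ker_mul_card_range,
    Nat.card_fun, Nat.card_eq_fintype_card (α := ι)]

end ContentIdeal

section LocalRing

open IsLocalRing

theorem isPrincipal_pow {R : Type*} [CommSemiring R] {I : Ideal R} (hI : I.IsPrincipal) (n : ℕ) :
    (I ^ n).IsPrincipal := by
  obtain ⟨a, rfl⟩ := hI
  exact ⟨a ^ n, Ideal.span_singleton_pow a n⟩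

variable {R : Type*} [CommRing R] [IsLocalRing R]

theorem exists_isUnit_iff_not_contentIdeal_le {ι : Type*} {w : ι → R} :
    (∃ i, IsUnit (w i)) ↔ ¬ contentIdeal w ≤ maximalIdeal R := by
  simp [contentIdeal_le_iff]

theorem card_units_add_card_maximalIdeal [Finite R] :
    Nat.card Rˣ + Nat.card (maximalIdeal R) = Nat.card R := by
  have hunits : Nat.card Rˣ = Nat.card {r : R // IsUnit r} :=
    Nat.card_congr Submonoid.unitsTypeEquivIsUnitSubmonoid.toEquiv
  have h := card_and_add_card_and_not (p := fun _ : R => True) (Set.toFinite _) IsUnit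
  simp only [true_and, Nat.card_congr (Equiv.subtypeUnivEquiv fun _ : R => trivial)] at h
  rw [hunits, ← h]
  rfl

theorem maximalIdeal_mul_lt {I : Ideal R} (hI : I.FG) (h : I ≠ ⊥) : maximalIdeal R * I < I :=
  Ideal.mul_le_right.lt_of_not_ge fun hle => h <|
    Submodule.eq_bot_of_le_smul_of_le_jacobson_bot _ I hI hle (maximalIdeal_le_jacobson ⊥)

theorem eq_of_le_of_not_le_maximalIdeal_mul {I J : Ideal R} (hJ : J.IsPrincipal) (hIJ : I ≤ J)
    (h : ¬ I ≤ maximalIdeal R * J) : I = J := by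
  obtain ⟨a, rfl⟩ := hJ
  obtain ⟨b, hbI, hb⟩ := SetLike.not_le_iff_exists.1 h
  obtain ⟨r, rfl⟩ := Submodule.mem_span_singleton.1 (hIJ hbI)
  have hr : IsUnit r := by
    by_contra hr
    exact hb (Ideal.mul_mem_mul hr (Submodule.mem_span_singleton_self a))
  refine hIJ.antisymm ((Submodule.span_singleton_le_iff_mem _ _).2 ?_)
  exact (Ideal.unit_mul_mem_iff_mem I hr).1 hbI

theorem card_eq_card_residueField_mul {I : Ideal R} (hI : I.IsPrincipal) (h : I ≠ ⊥) :
    Nat.card I = Nat.card (ResidueField R) * Nat.card ↥(maximalIdeal R * I) := by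
  obtain ⟨a, rfl⟩ := hI
  have ha : a ≠ 0 := fun ha => h (by simp [ha])
  let f := (LinearMap.toSpanSingleton R R a).toAddMonoidHom
  have hker : f.ker ≤ (maximalIdeal R).toAddSubgroup := fun r hr hu =>
    ha (hu.mul_right_eq_zero.1 hr)
  have hmap : (maximalIdeal R).toAddSubgroup.map f =
      (maximalIdeal R * Ideal.span {a}).toAddSubgroup := by
    ext b
    simp [f, Ideal.mem_mul_span_singleton]
  have hrange : (⊤ : AddSubgroup R).map f = (Ideal.span {a}).toAddSubgroup := by
    ext b
    simp [f, Ideal.mem_span_singleton']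
  have hindex : (maximalIdeal R * Ideal.span {a}).toAddSubgroup.relIndex
      (Ideal.span {a}).toAddSubgroup = Nat.card (ResidueField R) := by
    rw [← hmap, ← hrange, AddSubgroup.relIndex_map_map, sup_eq_left.2 hker, top_sup_eq,
      AddSubgroup.relIndex_top_right]
    rfl
  have hle : (maximalIdeal R * Ideal.span {a}).toAddSubgroup ≤ (Ideal.span {a}).toAddSubgroup :=
    Ideal.mul_le_right
  have hcard := AddSubgroup.relIndex_mul_relIndex ⊥ _ _ bot_le hle
  rw [AddSubgroup.relIndex_bot_left, AddSubgroup.relIndex_bot_left, hindex, mul_comm] at hcard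
  exact hcard.symm

theorem exists_eq_maximalIdeal_pow (hR : (maximalIdeal R).IsPrincipal) {s : ℕ}
    (hs : maximalIdeal R ^ s = ⊥) {I : Ideal R} (hI : I ≠ ⊥) :
    ∃ j < s, I = maximalIdeal R ^ j := by
  by_contra! hne
  have hle : ∀ j ≤ s, I ≤ maximalIdeal R ^ j := by
    intro j
    induction j with
    | zero => simp
    | succ j ih =>
      intro hj
      by_contra h
      rw [pow_succ'] at h
      exact hne j hj (eq_of_le_of_not_le_maximalIdeal_mul (isPrincipal_pow hR j)
        (ih (by lia)) h)
  exact hI (le_bot_iff.1 (hs ▸ hle s le_rfl))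

end LocalRing

section Lbeta

theorem Lbeta_succ (q s m : ℕ) :
    Lbeta q s (m + 1) = q ^ (s - 1) * Lbeta q s m + (q * q ^ (s - 1)) ^ m := by
  cases m with
  | zero => simp [Lbeta]
  | succ n =>
    simp only [Lbeta, Nat.add_sub_cancel, Finset.sum_range_succ _ (n + 1)]
    ring

theorem Lbeta_succ_pos {q : ℕ} (hq : 0 < q) (s m : ℕ) : 0 < Lbeta q s (m + 1) := by
  rw [Lbeta_succ]
  positivity

theorem pow_mul_Lbeta_lt_Lbeta_succ {q s j : ℕ} (hq : 0 < q) (hj : j < s) (m : ℕ) :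
    q ^ j * Lbeta q s m < Lbeta q s (m + 1) := by
  rw [Lbeta_succ]
  have hle : q ^ j * Lbeta q s m ≤ q ^ (s - 1) * Lbeta q s m := by
    gcongr
    lia
  have hpos : 0 < (q * q ^ (s - 1)) ^ m := by positivity
  lia

theorem Lbeta_sub_pow_mul_Lbeta_injOn {q : ℕ} (hq : 1 < q) (s m : ℕ) :
    Set.InjOn (fun j => Lbeta q s (m + 2) - q ^ j * Lbeta q s (m + 1)) (Set.Iio s) := by
  intro i hi j hj h
  have hle {l : ℕ} (hl : l < s) : q ^ l * Lbeta q s (m + 1) ≤ Lbeta q s (m + 2) :=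
    (pow_mul_Lbeta_lt_Lbeta_succ (by lia) hl (m + 1)).le
  have hmul : q ^ i * Lbeta q s (m + 1) = q ^ j * Lbeta q s (m + 1) :=
    (tsub_right_inj (hle hi) (hle hj)).1 h
  exact Nat.pow_right_injective hq
    (Nat.eq_of_mul_eq_mul_right (Lbeta_succ_pos (by lia) s m) hmul)

end Lbeta

section ChainRing

open IsLocalRing

/-- The local ring `R` is a chain ring with residue field of cardinality `q` and with principal
maximal ideal of nilpotency index `s`. Powers of the maximal ideal are used instead of powers of
a generator, so that no generator has to be chosen. -/
structure IsChainRing (R : Type*) [CommRing R] [IsLocalRing R] (q s : ℕ) : Prop where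
  isPrincipal : (maximalIdeal R).IsPrincipal
  card_residueField : Nat.card (ResidueField R) = q
  pow_eq_bot : maximalIdeal R ^ s = ⊥
  pow_ne_bot : ∀ j < s, maximalIdeal R ^ j ≠ ⊥

namespace IsChainRing

variable {R : Type*} [CommRing R] [IsLocalRing R] {q s : ℕ}

theorem of_maximalIdeal_eq_span {γ : R} (hmax : maximalIdeal R = Ideal.span {γ})
    (hnil : γ ^ s = 0) (hnil' : 2 ≤ s → γ ^ (s - 1) ≠ 0)
    (hq : Nat.card (R ⧸ Ideal.span {γ}) = q) : IsChainRing R q s where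
  isPrincipal := ⟨γ, hmax⟩
  card_residueField := by rw [← hq, ← hmax]; rfl
  pow_eq_bot := by rw [hmax, Ideal.span_singleton_pow, hnil, Ideal.span_singleton_eq_bot]
  pow_ne_bot j hj := by
    rw [hmax, Ideal.span_singleton_pow, Ne, Ideal.span_singleton_eq_bot]
    obtain rfl | hj0 := Nat.eq_zero_or_pos j
    · simp
    · exact fun h => hnil' (by lia) (pow_eq_zero_of_le (by lia) h)

theorem one_lt [Finite R] (hR : IsChainRing R q s) : 1 < q := by
  have : Finite (ResidueField R) := .of_surjective _ (residue_surjective (R := R))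
  exact hR.card_residueField ▸ Finite.one_lt_card

theorem pos (hR : IsChainRing R q s) : 0 < s := by
  refine Nat.pos_of_ne_zero fun hs => ?_
  simpa [hs] using hR.pow_eq_bot

theorem card_maximalIdeal_pow (hR : IsChainRing R q s) {j : ℕ} (hj : j ≤ s) :
    Nat.card ↥(maximalIdeal R ^ j) = q ^ (s - j) := by
  induction hj using Nat.decreasingInduction with
  | self => simp [hR.pow_eq_bot]
  | of_succ j hj ih =>
    rw [card_eq_card_residueField_mul (isPrincipal_pow hR.isPrincipal j) (hR.pow_ne_bot j hj),
      hR.card_residueField, ← pow_succ', ih, ← pow_succ']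
    congr 1
    lia

theorem card_maximalIdeal (hR : IsChainRing R q s) : Nat.card (maximalIdeal R) = q ^ (s - 1) := by
  simpa using hR.card_maximalIdeal_pow hR.pos

theorem card_eq (hR : IsChainRing R q s) : Nat.card R = q ^ s := by
  simpa [Nat.card_congr Submodule.topEquiv.toEquiv] using hR.card_maximalIdeal_pow s.zero_le

theorem contentIdeal_eq_maximalIdeal_pow_iff (hR : IsChainRing R q s) {ι : Type*} {x : ι → R}
    {j : ℕ} (hj : j < s) :
    contentIdeal x = maximalIdeal R ^ j ↔
      contentIdeal x ≤ maximalIdeal R ^ j ∧ ¬ contentIdeal x ≤ maximalIdeal R ^ (j + 1) := by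
  have hprin := isPrincipal_pow hR.isPrincipal j
  rw [pow_succ']
  constructor
  · intro h
    exact ⟨h.le, h ▸ (maximalIdeal_mul_lt hprin.fg (hR.pow_ne_bot j hj)).not_ge⟩
  · rintro ⟨hle, hnot⟩
    exact eq_of_le_of_not_le_maximalIdeal_mul hprin hle hnot

theorem card_contentIdeal_eq_maximalIdeal_pow [Finite R] (hR : IsChainRing R q s)
    {ι : Type*} [Fintype ι] {j : ℕ} (hj : j < s) :
    Nat.card {x : ι → R // contentIdeal x = maximalIdeal R ^ j} =
      q ^ (Fintype.card ι * (s - j)) - q ^ (Fintype.card ι * (s - j - 1)) := by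
  have h := card_and_add_card_and_not
    (Set.toFinite {x : ι → R | contentIdeal x ≤ maximalIdeal R ^ j})
    (fun x => contentIdeal x ≤ maximalIdeal R ^ (j + 1))
  have hsub (x : ι → R) : contentIdeal x ≤ maximalIdeal R ^ j ∧
      contentIdeal x ≤ maximalIdeal R ^ (j + 1) ↔ contentIdeal x ≤ maximalIdeal R ^ (j + 1) :=
    and_iff_right_of_imp fun hx => hx.trans (Ideal.pow_le_pow_right j.le_succ)
  simp only [hsub, ← hR.contentIdeal_eq_maximalIdeal_pow_iff hj, card_contentIdeal_le,
    hR.card_maximalIdeal_pow hj.le, hR.card_maximalIdeal_pow hj, ← pow_mul'] at h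
  lia

theorem card_eq_mul_card_maximalIdeal (hR : IsChainRing R q s) :
    Nat.card R = q * Nat.card (maximalIdeal R) := by
  rw [hR.card_maximalIdeal, hR.card_eq, mul_pow_sub_one hR.pos.ne']

theorem card_units_mul_Lbeta_add [Finite R] (hR : IsChainRing R q s) (m : ℕ) :
    Nat.card Rˣ * Lbeta q s m + Nat.card (maximalIdeal R) ^ m = Nat.card R ^ m := by
  have hunits := card_units_add_card_maximalIdeal (R := R)
  induction m with
  | zero => simp [Lbeta]
  | succ m ih =>
    rw [Lbeta_succ, ← hR.card_maximalIdeal, ← hR.card_eq_mul_card_maximalIdeal]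
    linear_combination Nat.card (maximalIdeal R) * ih + Nat.card R ^ m * hunits

end IsChainRing

end ChainRing

section Simplex

open IsLocalRing
open scoped Matrix

/-- The Hamming weight of the codeword `(x ⬝ᵥ g)_{g ∈ D}` of the simplex code with columns `D`. -/
noncomputable def codewordWeight {R ι : Type*} [CommRing R] [Fintype ι] (D : Finset (ι → R))
    (x : ι → R) : ℕ :=
  Nat.card {g // g ∈ D ∧ x ⬝ᵥ g ≠ 0}

theorem card_zeros_add_codewordWeight {R ι : Type*} [CommRing R] [Fintype ι]
    (D : Finset (ι → R)) (x : ι → R) :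
    Nat.card {g // g ∈ D ∧ x ⬝ᵥ g = 0} + codewordWeight D x = D.card := by
  rw [codewordWeight, card_and_add_card_and_not (p := (· ∈ D)) D.finite_toSet]
  exact (Nat.card_eq_fintype_card (α := D)).trans (Fintype.card_coe D)

namespace IsBetaColumnSet

section CommRing

variable {R : Type} [CommRing R] {k : ℕ} {D : Finset (Fin k → R)}

theorem card_units_mul_card (hD : IsBetaColumnSet D) {P : (Fin k → R) → Prop}
    (hP : ∀ (u : Rˣ) w, P ((u : R) • w) ↔ P w) :
    Nat.card Rˣ * Nat.card {g // g ∈ D ∧ P g} =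
      Nat.card {w : Fin k → R // P w ∧ ∃ i, IsUnit (w i)} := by
  have hunit (u : Rˣ) {g} (hg : g ∈ D) : ∃ i, IsUnit (((u : R) • g) i) :=
    (hD.1 g hg).imp fun _ hi => u.isUnit.mul hi
  let scale (p : Rˣ × {g // g ∈ D ∧ P g}) : {w : Fin k → R // P w ∧ ∃ i, IsUnit (w i)} :=
    ⟨(p.1 : R) • p.2.1, (hP _ _).2 p.2.2.2, hunit p.1 p.2.2.1⟩
  have hinj : scale.Injective := by
    rintro ⟨u, g, hg, _⟩ ⟨v, h, hh, _⟩ hsmul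
    have hpair : (u, g) = (v, h) :=
      (hD.2 _ (hunit u hg)).unique ⟨hg, rfl⟩ ⟨hh, congrArg Subtype.val hsmul⟩
    simpa using hpair
  have hsurj : scale.Surjective := by
    rintro ⟨w, hPw, hw⟩
    obtain ⟨⟨u, g⟩, ⟨hg, rfl⟩, -⟩ := hD.2 w hw
    exact ⟨(u, ⟨g, hg, (hP u g).1 hPw⟩), rfl⟩
  rw [← Nat.card_prod, Nat.card_congr (Equiv.ofBijective scale ⟨hinj, hsurj⟩)]

theorem codewordWeight_eq_zero_iff (hD : IsBetaColumnSet D) (x : Fin k → R) :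
    codewordWeight D x = 0 ↔ x = 0 := by
  refine ⟨fun h => funext fun i => ?_, fun h => by simp [codewordWeight, h]⟩
  have : Finite {g // g ∈ D ∧ x ⬝ᵥ g ≠ 0} := D.finite_toSet.subset fun g hg => hg.1
  have hempty := Finite.card_eq_zero_iff.1 h
  -- The `i`-th standard basis vector is a multiple of a column, and `x` pairs with it to `x i`.
  obtain ⟨⟨u, g⟩, ⟨hg, hug⟩, -⟩ := hD.2 (Pi.single i 1) ⟨i, by simp⟩
  have hxg : x ⬝ᵥ g = 0 := by
    by_contra hne
    exact hempty.false ⟨g, hg, hne⟩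
  rw [← dotProduct_single_one x i, hug, dotProduct_smul, hxg, smul_zero, Pi.zero_apply]

end CommRing

section LocalRing

variable {R : Type} [CommRing R] [IsLocalRing R] [Finite R]

theorem card_units_mul_card_zeros_add {k : ℕ} {D : Finset (Fin k → R)} (hD : IsBetaColumnSet D)
    (x : Fin k → R) :
    Nat.card Rˣ * Nat.card {g // g ∈ D ∧ x ⬝ᵥ g = 0} +
      Nat.card {w // contentIdeal w ≤ maximalIdeal R ∧ x ⬝ᵥ w = 0} =
      Nat.card {w // x ⬝ᵥ w = 0} := by
  have hsmul (u : Rˣ) (w : Fin k → R) : x ⬝ᵥ ((u : R) • w) = 0 ↔ x ⬝ᵥ w = 0 := by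
    rw [dotProduct_smul, smul_eq_mul, Units.mul_right_eq_zero]
  rw [hD.card_units_mul_card hsmul, add_comm]
  simp only [exists_isUnit_iff_not_contentIdeal_le, and_comm (a := contentIdeal _ ≤ _)]
  exact card_and_add_card_and_not (Set.toFinite _) _

theorem card_eq {k : ℕ} {D : Finset (Fin k → R)} (hD : IsBetaColumnSet D) {q s : ℕ}
    (hR : IsChainRing R q s) : D.card = Lbeta q s k := by
  have h := hD.card_units_mul_card_zeros_add 0
  simp only [zero_dotProduct, and_true, card_contentIdeal_le, Fintype.card_fin,
    Nat.card_congr (Equiv.subtypeUnivEquiv fun _ : Fin k → R => trivial), Nat.card_fun,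
    Nat.card_fin, Nat.card_eq_fintype_card (α := D), Fintype.card_coe,
    ← hR.card_units_mul_Lbeta_add k] at h
  exact Nat.eq_of_mul_eq_mul_left Nat.card_pos (Nat.add_right_cancel h)

theorem card_contentIdeal_mul_card_zeros {m : ℕ} {D : Finset (Fin (m + 1) → R)}
    (hD : IsBetaColumnSet D) {q s : ℕ} (hR : IsChainRing R q s) {x : Fin (m + 1) → R}
    (hprin : (contentIdeal x).IsPrincipal) (hx : x ≠ 0) :
    Nat.card (contentIdeal x) * Nat.card {g // g ∈ D ∧ x ⬝ᵥ g = 0} =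
      Nat.card R * Lbeta q s m := by
  have hmax : Nat.card (contentIdeal x) *
      Nat.card {w // contentIdeal w ≤ maximalIdeal R ∧ x ⬝ᵥ w = 0} =
      Nat.card R * Nat.card (maximalIdeal R) ^ m := by
    have h := card_orthogonal_mul_card_mul_contentIdeal x (maximalIdeal R)
    rw [Fintype.card_fin] at h
    rw [card_eq_card_residueField_mul hprin (mt contentIdeal_eq_bot_iff.1 hx),
      hR.card_residueField, hR.card_eq_mul_card_maximalIdeal]
    linear_combination q * h
  have htop : Nat.card (contentIdeal x) * Nat.card {w // x ⬝ᵥ w = 0} =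
      Nat.card R * Nat.card R ^ m := by
    have h := card_orthogonal_mul_card_mul_contentIdeal x ⊤
    simp only [le_top, true_and, Ideal.top_mul, Nat.card_congr Submodule.topEquiv.toEquiv,
      Fintype.card_fin] at h
    linear_combination h
  refine Nat.eq_of_mul_eq_mul_left (Nat.card_pos (α := Rˣ))
    (Nat.add_right_cancel (m := Nat.card R * Nat.card (maximalIdeal R) ^ m) ?_)
  calc
    _ = Nat.card (contentIdeal x) *
        (Nat.card Rˣ * Nat.card {g // g ∈ D ∧ x ⬝ᵥ g = 0} +
          Nat.card {w // contentIdeal w ≤ maximalIdeal R ∧ x ⬝ᵥ w = 0}) := by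
      rw [← hmax]; ring
    _ = Nat.card R * Nat.card R ^ m := by rw [hD.card_units_mul_card_zeros_add, htop]
    _ = _ := by rw [← hR.card_units_mul_Lbeta_add m]; ring

theorem codewordWeight_eq {m : ℕ} {D : Finset (Fin (m + 1) → R)}
    (hD : IsBetaColumnSet D) {q s : ℕ} (hR : IsChainRing R q s) {j : ℕ} (hj : j < s)
    {x : Fin (m + 1) → R} (hx : contentIdeal x = maximalIdeal R ^ j) :
    codewordWeight D x = Lbeta q s (m + 1) - q ^ j * Lbeta q s m := by
  have hx0 : x ≠ 0 := mt contentIdeal_eq_bot_iff.2 (hx ▸ hR.pow_ne_bot j hj)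
  have hmul := hD.card_contentIdeal_mul_card_zeros hR
    (hx ▸ isPrincipal_pow hR.isPrincipal j) hx0
  rw [hx, hR.card_maximalIdeal_pow hj.le, hR.card_eq, ← pow_sub_mul_pow q hj.le, mul_assoc] at hmul
  have hq := hR.one_lt
  have hzeros := Nat.eq_of_mul_eq_mul_left (by positivity) hmul
  rw [← hD.card_eq hR, ← hzeros, ← card_zeros_add_codewordWeight D x, Nat.add_sub_cancel_left]

theorem codewordWeight_eq_iff {m : ℕ} {D : Finset (Fin (m + 2) → R)}
    (hD : IsBetaColumnSet D) {q s : ℕ} (hR : IsChainRing R q s) {j : ℕ} (hj : j < s)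
    (x : Fin (m + 2) → R) :
    codewordWeight D x = Lbeta q s (m + 2) - q ^ j * Lbeta q s (m + 1) ↔
      contentIdeal x = maximalIdeal R ^ j := by
  refine ⟨fun h => ?_, hD.codewordWeight_eq hR hj⟩
  have hx : x ≠ 0 := by
    rw [Ne, ← hD.codewordWeight_eq_zero_iff, h]
    exact (Nat.sub_pos_of_lt
      (pow_mul_Lbeta_lt_Lbeta_succ (by have := hR.one_lt; lia) hj _)).ne'
  obtain ⟨i, hi, hxi⟩ := exists_eq_maximalIdeal_pow hR.isPrincipal hR.pow_eq_bot
    (mt contentIdeal_eq_bot_iff.1 hx)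
  have hij : i = j := Lbeta_sub_pow_mul_Lbeta_injOn hR.one_lt s m hi hj
    ((hD.codewordWeight_eq hR hi hxi).symm.trans h)
  rw [hxi, hij]

end LocalRing

end IsBetaColumnSet

end Simplex

/-- Hamming weight distribution of `S_k^β`: for `k ≥ 2`, a β-column set
`D ⊆ R^k`, and each `j ∈ {0,…,s−1}`, exactly `q^(k(s−j)) − q^(k(s−j−1))` elements
`x ∈ R^k` give codewords of Hamming weight `L_β(k) − q^j·L_β(k−1)`, and only `x = 0` gives
Hamming weight `0`. -/
theorem stmt_14
    (R : Type) [CommRing R] [IsLocalRing R] [Fintype R]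
    (γ : R) (s q : ℕ)
    (hs : 1 ≤ s)
    (hmax : IsLocalRing.maximalIdeal R = Ideal.span {γ})
    (hnil : γ ^ s = 0)
    (hnil' : 2 ≤ s → γ ^ (s - 1) ≠ 0)
    (hq : Nat.card (R ⧸ Ideal.span ({γ} : Set R)) = q)
    (k : ℕ) (hk : 2 ≤ k)
    (D : Finset (Fin k → R)) (hD : IsBetaColumnSet D) :
    (∀ j : ℕ, j < s →
      Nat.card {x : Fin k → R //
          Nat.card {g : Fin k → R // g ∈ D ∧ ∑ i, x i * g i ≠ 0}
            = Lbeta q s k - q ^ j * Lbeta q s (k - 1)}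
        = q ^ (k * (s - j)) - q ^ (k * (s - j - 1))) ∧
    (∀ x : Fin k → R,
      Nat.card {g : Fin k → R // g ∈ D ∧ ∑ i, x i * g i ≠ 0} = 0 ↔ x = 0) := by
  obtain ⟨m, rfl⟩ := Nat.exists_eq_add_of_le' hk
  have hR : IsChainRing R q s := .of_maximalIdeal_eq_span hmax hnil hnil' hq
  refine ⟨fun j hj => ?_, hD.codewordWeight_eq_zero_iff⟩
  calc
    _ = Nat.card {x : Fin (m + 2) → R // contentIdeal x = IsLocalRing.maximalIdeal R ^ j} :=
      Nat.card_congr (Equiv.subtypeEquivRight (hD.codewordWeight_eq_iff hR hj))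
    _ = _ := by rw [hR.card_contentIdeal_eq_maximalIdeal_pow hj, Fintype.card_fin]
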